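/- Let Λ ⊂ ℝ^d be a full-rank lattice with covering radius h(Λ) < 1/2, and let P = Λ ∩ [0,1)^d. Then the covering radius of P with respect to [0,1]^d satisfies h(P) ≤ (1+√d) · h(Λ). -/

import Mathlib

open scoped RealInnerProductSpace

noncomputable section

/-- `ℝ^d` with the Euclidean norm. -/
abbrev Euc (d : ℕ) := EuclideanSpace ℝ (Fin d)

/-- `Λ` is the full-rank lattice generated by the columns of the invertible matrix `T`. -/
def IsLatticeOf {d : ℕ} (Λ : Set (Euc d)) (T : Matrix (Fin d) (Fin d) ℝ) : Prop :=
  IsUnit T.det ∧ Λ = { v : Euc d | ∃ k : Fin d → ℤ, ∀ i, v i = ∑ j, T i j * (k j : ℝ) }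

/-- Covering radius of `Λ` with respect to all of `ℝ^d`:
`h(Λ) = sup_{x ∈ ℝ^d} inf_{y ∈ Λ} ‖x - y‖₂`. -/
def covRad {d : ℕ} (Λ : Set (Euc d)) : ℝ :=
  ⨆ x : Euc d, sInf (Set.image (dist x) Λ)

/-- Separation radius of a lattice: half the length of the shortest nonzero vector. -/
def sepRad {d : ℕ} (Λ : Set (Euc d)) : ℝ :=
  (1 / 2) * sInf (Set.image norm (Λ \ {0}))

/-- Mesh ratio `ρ(Λ) = h(Λ)/q(Λ)` of a lattice. -/
def meshRatio {d : ℕ} (Λ : Set (Euc d)) : ℝ := covRad Λ / sepRad Λ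

/-- The `j`-th successive minimum of `Λ` with respect to the Euclidean unit ball:
`λ_j(Λ) = inf { r > 0 : dim span(Λ ∩ rB_d) ≥ j }`. -/
def succMin {d : ℕ} (Λ : Set (Euc d)) (j : ℕ) : ℝ :=
  sInf { r : ℝ | 0 < r ∧
    j ≤ Module.finrank ℝ (Submodule.span ℝ (Λ ∩ Metric.closedBall (0 : Euc d) r)) }

/-- The dual lattice `Λ⊥ = { y : x·y ∈ ℤ for all x ∈ Λ }`. -/
def dualLat {d : ℕ} (Λ : Set (Euc d)) : Set (Euc d) :=
  { y | ∀ x ∈ Λ, ∃ n : ℤ, ⟪x, y⟫ = (n : ℝ) }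

/-- The closed unit cube `[0,1]^d`. -/
def unitCube (d : ℕ) : Set (Euc d) := { x | ∀ i, 0 ≤ x i ∧ x i ≤ 1 }

/-- The half-open unit cube `[0,1)^d`. -/
def halfOpenCube (d : ℕ) : Set (Euc d) := { x | ∀ i, 0 ≤ x i ∧ x i < 1 }

/-- Covering radius of a point set `P` with respect to the unit cube `[0,1]^d`. -/
def covRadCube {d : ℕ} (P : Set (Euc d)) : ℝ :=
  ⨆ x : unitCube d, sInf (Set.image (dist (x : Euc d)) P)

/-- Separation radius of a point set:
`q(P) = (1/2) min_{x ≠ y ∈ P} ‖x - y‖₂`. -/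
def sepRadSet {d : ℕ} (P : Set (Euc d)) : ℝ :=
  (1 / 2) * sInf { r : ℝ | ∃ x ∈ P, ∃ y ∈ P, x ≠ y ∧ r = dist x y }

/-- Mesh ratio `ρ(P) = h(P)/q(P)` of a point set with respect to `[0,1]^d`. -/
def meshRatioSet {d : ℕ} (P : Set (Euc d)) : ℝ := covRadCube P / sepRadSet P

/-- The constant `C_d = 2^d Γ(1+d/2) / π^{d/2}`. -/
def Cd (d : ℕ) : ℝ := 2 ^ d * Real.Gamma (1 + (d : ℝ) / 2) / Real.pi ^ ((d : ℝ) / 2)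

lemma bdd_aux {d : ℕ} (Λ : Set (Euc d)) (T : Matrix (Fin d) (Fin d) ℝ)
    (hT : IsLatticeOf Λ T) :
    BddAbove (Set.range fun x : Euc d => sInf (Set.image (dist x) Λ)) := by
  obtain ⟨hdet, hΛ⟩ := hT
  refine ⟨Real.sqrt (∑ i, (∑ j, |T i j|) ^ 2), ?_⟩
  rintro _ ⟨x, rfl⟩
  let c : Fin d → ℝ := T⁻¹.mulVec (fun i => x i)
  have hc : ∀ i, x i = ∑ j, T i j * c j := by
    intro i
    have h : T.mulVec c = fun i => x i := by
      simp only [c, Matrix.mulVec_mulVec, Matrix.mul_nonsing_inv T hdet, Matrix.one_mulVec]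
    have h2 := congrFun h i
    simp only [Matrix.mulVec, dotProduct] at h2
    exact h2.symm
  let y : Euc d := WithLp.toLp 2 (fun i => ∑ j, T i j * ((⌊c j⌋ : ℤ) : ℝ))
  have hy : y ∈ Λ := by
    rw [hΛ]
    exact ⟨fun j => ⌊c j⌋, fun i => rfl⟩
  have hle : sInf (Set.image (dist x) Λ) ≤ dist x y :=
    csInf_le ⟨0, by rintro _ ⟨z, _, rfl⟩; exact dist_nonneg⟩ ⟨y, hy, rfl⟩
  refine hle.trans ?_
  rw [EuclideanSpace.dist_eq]
  apply Real.sqrt_le_sqrt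
  apply Finset.sum_le_sum
  intro i _
  apply pow_le_pow_left₀ dist_nonneg
  have hxy : x i - y i = ∑ j, T i j * Int.fract (c j) := by
    have : y i = ∑ j, T i j * ((⌊c j⌋ : ℤ) : ℝ) := rfl
    rw [this, hc i, ← Finset.sum_sub_distrib]
    refine Finset.sum_congr rfl fun j _ => ?_
    rw [← mul_sub, Int.self_sub_floor]
  rw [Real.dist_eq, hxy]
  refine (Finset.abs_sum_le_sum_abs _ _).trans (Finset.sum_le_sum fun j _ => ?_)
  rw [abs_mul, abs_of_nonneg (Int.fract_nonneg (c j))]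
  exact mul_le_of_le_one_right (abs_nonneg _) (Int.fract_lt_one _).le

theorem stmt3 {d : ℕ} (Λ : Set (Euc d)) (T : Matrix (Fin d) (Fin d) ℝ)
    (hT : IsLatticeOf Λ T) (hcov : covRad Λ < 1 / 2) :
    covRadCube (Λ ∩ halfOpenCube d) ≤ (1 + Real.sqrt d) * covRad Λ := by
  have hne : (Λ : Set (Euc d)).Nonempty := ⟨0, by rw [hT.2]; exact ⟨0, by simp⟩⟩
  have h0 : 0 ≤ covRad Λ := Real.iSup_nonneg fun x =>
    Real.sInf_nonneg (by rintro _ ⟨z, _, rfl⟩; exact dist_nonneg)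
  haveI : Nonempty (unitCube d) := ⟨⟨0, fun i => by simp⟩⟩
  refine ciSup_le fun x => ?_
  have key : ∀ r, covRad Λ < r → r < 1 / 2 →
      sInf (Set.image (dist (x : Euc d)) (Λ ∩ halfOpenCube d)) ≤ (1 + Real.sqrt d) * r := by
    intro r hr hr2
    let x' : Euc d := WithLp.toLp 2 (fun i => max r (min (1 - r) ((x : Euc d) i)))
    have hx' : ∀ i, x' i = max r (min (1 - r) ((x : Euc d) i)) := fun i => rfl
    have hlt : sInf (Set.image (dist x') Λ) < r :=
      (le_ciSup (bdd_aux Λ T hT) x').trans_lt hr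
    obtain ⟨_, ⟨y, hy, rfl⟩, hyr⟩ := exists_lt_of_csInf_lt (hne.image _) hlt
    have hcoord : ∀ i, |x' i - y i| < r := by
      intro i
      refine lt_of_le_of_lt ?_ hyr
      rw [dist_eq_norm]
      exact PiLp.norm_apply_le (x' - y) i
    have hymem : y ∈ halfOpenCube d := by
      intro i
      have h1 := abs_lt.1 (hcoord i)
      have h2 : r ≤ x' i := by rw [hx']; exact le_max_left _ _
      have h3 : x' i ≤ 1 - r := by
        rw [hx']; exact max_le (by linarith) (min_le_left _ _)
      constructor <;> linarith [h1.1, h1.2]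
    have hd : dist (x : Euc d) x' ≤ Real.sqrt d * r := by
      have hrn : 0 ≤ r := h0.trans hr.le
      rw [EuclideanSpace.dist_eq]
      have : Real.sqrt d * r = Real.sqrt (∑ _i : Fin d, r ^ 2) := by
        rw [Finset.sum_const, Finset.card_univ, Fintype.card_fin, nsmul_eq_mul,
          Real.sqrt_mul (Nat.cast_nonneg d), Real.sqrt_sq hrn]
      rw [this]
      apply Real.sqrt_le_sqrt
      apply Finset.sum_le_sum
      intro i _
      apply pow_le_pow_left₀ dist_nonneg
      have hx := x.2 i
      rw [Real.dist_eq, hx', abs_le]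
      rcases max_cases r (min (1 - r) ((x : Euc d) i)) with h | h <;>
      rcases min_cases (1 - r) ((x : Euc d) i) with h' | h' <;>
      constructor <;> linarith [h.1, h.2, h'.1, h'.2, hx.1, hx.2]
    have hle : sInf (Set.image (dist (x : Euc d)) (Λ ∩ halfOpenCube d)) ≤ dist (x : Euc d) y :=
      csInf_le ⟨0, by rintro _ ⟨z, _, rfl⟩; exact dist_nonneg⟩ ⟨y, ⟨hy, hymem⟩, rfl⟩
    have := dist_triangle (x : Euc d) x' y
    linarith
  have hs : 0 < 1 + Real.sqrt d := by positivity
  rw [← div_le_iff₀' hs]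
  refine le_of_forall_gt_imp_ge_of_dense fun r hr => ?_
  rcases lt_or_ge r (1 / 2) with h | h
  · rw [div_le_iff₀' hs]; exact key r hr h
  · obtain ⟨m, hm1, hm2⟩ := exists_between hcov
    rw [div_le_iff₀' hs]
    refine (key m hm1 hm2).trans ?_
    exact mul_le_mul_of_nonneg_left (by linarith) hs.le

end
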